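/- The ℂ-vector space of homogeneous degree-10 polynomials p ∈ ℂ[z₀,…,z₄] with p ∘ g₁ = p and p ∘ g₂ = p has dimension 41. -/

import Mathlib

open MvPolynomial

/-- `ω = exp(2πi/5)`, a primitive fifth root of unity. -/
noncomputable def ω : ℂ := Complex.exp (2 * Real.pi * Complex.I / 5)

/-- Substitution `p ↦ p ∘ g₁` where `g₁(z₀,z₁,z₂,z₃,z₄) = (z₄,z₀,z₁,z₂,z₃)`. -/
noncomputable def compG1 : MvPolynomial (Fin 5) ℂ →ₐ[ℂ] MvPolynomial (Fin 5) ℂ :=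
  aeval fun i : Fin 5 => X (i - 1)

/-- Substitution `p ↦ p ∘ g₂` where `g₂(z₀,…,z₄) = (z₀, ω z₁, ω² z₂, ω³ z₃, ω⁴ z₄)`. -/
noncomputable def compG2 : MvPolynomial (Fin 5) ℂ →ₐ[ℂ] MvPolynomial (Fin 5) ℂ :=
  aeval fun i : Fin 5 => C (ω ^ (i : ℕ)) * X i

/-- cyclic rotation of an exponent vector -/
def rot (k : Fin 5) (a : Fin 5 → ℕ) : Fin 5 → ℕ := fun i => a (i + k)

def wt (a : Fin 5 → ℕ) : ℕ := a 1 + 2 * a 2 + 3 * a 3 + 4 * a 4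

def enc (a : Fin 5 → ℕ) : ℕ := a 0 + 11 * a 1 + 121 * a 2 + 1331 * a 3 + 14641 * a 4

def reps : Finset (Fin 5 → ℕ) :=
  (Finset.Nat.antidiagonalTuple 5 10).filter fun a => wt a % 5 = 0 ∧ ∀ k, enc a ≤ enc (rot k a)

set_option maxRecDepth 100000 in
theorem reps_card : reps.card = 41 := by decide +kernel

theorem mem_reps (a : Fin 5 → ℕ) : a ∈ reps ↔
    a 0 + a 1 + a 2 + a 3 + a 4 = 10 ∧ wt a % 5 = 0 ∧ ∀ k, enc a ≤ enc (rot k a) := by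
  simp [reps, Finset.Nat.mem_antidiagonalTuple, Fin.sum_univ_five]

theorem rot_rot (j k : Fin 5) (a : Fin 5 → ℕ) : rot j (rot k a) = rot (j + k) a := by
  funext i; simp [rot, add_assoc]

theorem rot_deg (k : Fin 5) (a : Fin 5 → ℕ) :
    rot k a 0 + rot k a 1 + rot k a 2 + rot k a 3 + rot k a 4 = a 0 + a 1 + a 2 + a 3 + a 4 := by
  have h : ∑ i, a (i + k) = ∑ i, a i := Equiv.sum_comp (Equiv.addRight k) a
  simpa [Fin.sum_univ_five, rot] using h

theorem rot_wt (k : Fin 5) (a : Fin 5 → ℕ) (h : a 0 + a 1 + a 2 + a 3 + a 4 = 10)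
    (hw : wt a % 5 = 0) : wt (rot k a) % 5 = 0 := by
  have e : ∀ i j : Fin 5, rot i a j = a (j + i) := fun _ _ => rfl
  unfold wt at *
  fin_cases k <;> simp only [e] <;> simp only [Fin.reduceAdd, Fin.mk_one, Fin.zero_eta, Fin.reduceFinMk, add_zero] <;> omega

theorem reps_unique (a : Fin 5 → ℕ) (k : Fin 5) (ha : a ∈ reps) (hb : rot k a ∈ reps) :
    rot k a = a := by
  have hd := rot_deg k a
  rw [mem_reps] at ha hb
  have h1 := ha.2.2 k
  have h2 := hb.2.2 (-k)
  rw [rot_rot, neg_add_cancel] at h2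
  have h3 : rot 0 a = a := by funext i; simp [rot]
  rw [h3] at h2
  have h4 := ha.1
  have h5 := hb.1
  generalize rot k a = b at *
  unfold enc at h1 h2
  clear hd ha hb h3
  have e0 : a 0 = b 0 := by omega
  have e1 : a 1 = b 1 := by omega
  have e2 : a 2 = b 2 := by omega
  have e3 : a 3 = b 3 := by omega
  funext i
  fin_cases i <;> simp only [Fin.mk_one, Fin.zero_eta, Fin.reduceFinMk] <;> omega

theorem reps_exists (a : Fin 5 → ℕ) (h : a 0 + a 1 + a 2 + a 3 + a 4 = 10)
    (hw : wt a % 5 = 0) : ∃ k, rot k a ∈ reps := by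
  obtain ⟨k, hk⟩ := Finite.exists_min (fun k => enc (rot k a))
  refine ⟨k, (mem_reps _).2 ⟨by rw [rot_deg, h], rot_wt k a h hw, fun j => ?_⟩⟩
  rw [rot_rot]; exact hk _

/-- exponent vector as a finitely supported function -/
noncomputable def ex (a : Fin 5 → ℕ) : Fin 5 →₀ ℕ := Finsupp.equivFunOnFinite.symm a

theorem ex_apply (a : Fin 5 → ℕ) (i : Fin 5) : ex a i = a i := rfl

theorem ex_inj {a b : Fin 5 → ℕ} : ex a = ex b ↔ a = b :=
  Finsupp.equivFunOnFinite.symm.injective.eq_iff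

theorem ex_coe (d : Fin 5 →₀ ℕ) : ex d = d := by ext i; rfl

theorem compG1_eq : compG1 = rename (fun i : Fin 5 => i - 1) := by
  ext i; simp [compG1]

theorem mapDomain_ex (a : Fin 5 → ℕ) :
    (ex a).mapDomain (fun i : Fin 5 => i - 1) = ex (rot 1 a) := by
  ext i
  have h := Finsupp.mapDomain_apply (f := fun i : Fin 5 => i - 1)
    (fun x y h => sub_left_injective h) (ex a) (i + 1)
  simp only [add_sub_cancel_right] at h
  rw [h]; rfl

theorem coeff_G1 (p : MvPolynomial (Fin 5) ℂ) (a : Fin 5 → ℕ) :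
    coeff (ex (rot 1 a)) (compG1 p) = coeff (ex a) p := by
  rw [← mapDomain_ex, compG1_eq]
  exact coeff_rename_mapDomain _ (fun x y h => sub_left_injective h) _ _

theorem G1_monomial (a : Fin 5 → ℕ) (c : ℂ) :
    compG1 (monomial (ex a) c) = monomial (ex (rot 1 a)) c := by
  rw [← mapDomain_ex, compG1_eq, rename_monomial]

theorem G2_monomial (d : Fin 5 →₀ ℕ) (c : ℂ) :
    compG2 (monomial d c) = monomial d (ω ^ wt d * c) := by
  rw [compG2, aeval_monomial, monomial_eq, Finsupp.prod_fintype _ _ (by simp),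
    Finsupp.prod_fintype _ _ (by simp)]
  simp only [Fin.prod_univ_five, mul_pow, wt, pow_add, pow_mul, map_mul, map_pow, algebraMap_eq]
  simp
  ring

theorem coeff_G2 (p : MvPolynomial (Fin 5) ℂ) (d : Fin 5 →₀ ℕ) :
    coeff d (compG2 p) = ω ^ wt d * coeff d p := by
  induction p using MvPolynomial.induction_on' with
  | monomial u a =>
    rw [G2_monomial, coeff_monomial, coeff_monomial]
    split_ifs with h
    · rw [h]
    · simp
  | add p q hp hq => rw [map_add, coeff_add, hp, hq, coeff_add, mul_add]

theorem omega_prim : IsPrimitiveRoot ω 5 := by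
  have := Complex.isPrimitiveRoot_exp 5 (by norm_num)
  simpa [ω] using this

theorem deg_ex (a : Fin 5 → ℕ) : (ex a).degree = a 0 + a 1 + a 2 + a 3 + a 4 := by
  rw [Finsupp.degree_eq_sum, Fin.sum_univ_five]; rfl

noncomputable def V : Submodule ℂ (MvPolynomial (Fin 5) ℂ) :=
  homogeneousSubmodule (Fin 5) ℂ 10 ⊓
        LinearMap.ker (compG1.toLinearMap - LinearMap.id) ⊓
        LinearMap.ker (compG2.toLinearMap - LinearMap.id)

theorem mem_V (p : MvPolynomial (Fin 5) ℂ) :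
    p ∈ V ↔ p.IsHomogeneous 10 ∧ compG1 p = p ∧ compG2 p = p := by
  simp [V, sub_eq_zero, and_assoc]

theorem V_rot {p : MvPolynomial (Fin 5) ℂ} (hp : p ∈ V) (a : Fin 5 → ℕ) (k : Fin 5) :
    coeff (ex (rot k a)) p = coeff (ex a) p := by
  have h1 : ∀ b, coeff (ex (rot 1 b)) p = coeff (ex b) p := fun b => by
    conv_lhs => rw [← ((mem_V p).1 hp).2.1]
    exact coeff_G1 p b
  have h0 : rot 0 a = a := by funext i; simp [rot]
  have hs : ∀ j, coeff (ex (rot j a)) p = coeff (ex a) p →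
      coeff (ex (rot (1 + j) a)) p = coeff (ex a) p := fun j hj => by
    rw [← rot_rot, h1, hj]
  have k0 : coeff (ex (rot 0 a)) p = coeff (ex a) p := by rw [h0]
  have k1 := hs _ k0
  have k2 := hs _ k1
  have k3 := hs _ k2
  have k4 := hs _ k3
  fin_cases k
  exacts [k0, k1, k2, k3, k4]

theorem V_wt {p : MvPolynomial (Fin 5) ℂ} (hp : p ∈ V) (a : Fin 5 → ℕ)
    (h : coeff (ex a) p ≠ 0) : a 0 + a 1 + a 2 + a 3 + a 4 = 10 ∧ wt a % 5 = 0 := by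
  obtain ⟨h1, -, h2⟩ := (mem_V p).1 hp
  constructor
  · rw [← deg_ex]
    by_contra hne
    exact h (h1.coeff_eq_zero hne)
  · have h3 := coeff_G2 p (ex a)
    rw [h2] at h3
    have h4 : ω ^ wt a = 1 := by
      have : (ω ^ wt a - 1) * coeff (ex a) p = 0 := by
        rw [sub_mul, one_mul, sub_eq_zero]; exact h3.symm
      rcases mul_eq_zero.1 this with h | h'
      · exact sub_eq_zero.1 h
      · exact absurd h' h
    exact Nat.mod_eq_zero_of_dvd ((omega_prim.pow_eq_one_iff_dvd _).1 h4)

noncomputable def orb (a : Fin 5 → ℕ) : MvPolynomial (Fin 5) ℂ :=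
  ∑ k : Fin 5, monomial (ex (rot k a)) 1

theorem orb_mem (a : Fin 5 → ℕ) (ha : a ∈ reps) : orb a ∈ V := by
  rw [mem_reps] at ha
  rw [mem_V]
  refine ⟨?_, ?_, ?_⟩
  · refine IsHomogeneous.sum _ _ _ fun k _ => isHomogeneous_monomial _ ?_
    rw [deg_ex, rot_deg, ha.1]
  · simp only [orb, map_sum, G1_monomial, rot_rot]
    exact Equiv.sum_comp (Equiv.addLeft (1 : Fin 5)) (fun k => monomial (ex (rot k a)) (1 : ℂ))
  · simp only [orb, map_sum, G2_monomial]
    refine Finset.sum_congr rfl fun k _ => ?_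
    have : ω ^ wt (ex (rot k a)) = 1 :=
      (omega_prim.pow_eq_one_iff_dvd _).2 (Nat.dvd_of_mod_eq_zero (rot_wt k a ha.1 ha.2.1))
    rw [this, one_mul]

theorem orb_coeff_ne (a b : Fin 5 → ℕ) (ha : a ∈ reps) (hb : b ∈ reps) (hab : a ≠ b) :
    coeff (ex b) (orb a) = 0 := by
  rw [orb, coeff_sum]
  refine Finset.sum_eq_zero fun k _ => ?_
  rw [coeff_monomial, if_neg]
  rw [ex_inj]
  rintro rfl
  exact hab (reps_unique a k ha hb).symm

theorem orb_coeff_self (a : Fin 5 → ℕ) : coeff (ex a) (orb a) ≠ 0 := by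
  rw [orb, coeff_sum]
  simp only [coeff_monomial]
  rw [Finset.sum_boole, Nat.cast_ne_zero, Finset.card_ne_zero]
  refine ⟨0, ?_⟩
  have h0 : rot 0 a = a := by funext i; simp [rot]
  simp [h0]

noncomputable def Phi : V →ₗ[ℂ] (reps → ℂ) where
  toFun p r := coeff (ex r) p.1
  map_add' p q := by funext r; simp
  map_smul' c p := by funext r; simp

theorem Phi_inj : Function.Injective Phi := by
  rw [injective_iff_map_eq_zero]
  rintro ⟨p, hp⟩ h
  ext d
  by_contra hd
  change coeff d p ≠ 0 at hd
  rw [← ex_coe d] at hd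
  obtain ⟨h1, h2⟩ := V_wt hp d hd
  obtain ⟨k, hk⟩ := reps_exists d h1 h2
  apply hd
  rw [← V_rot hp d k]
  exact congrFun h ⟨_, hk⟩

theorem Phi_surj : Function.Surjective Phi := by
  intro f
  refine ⟨∑ r : reps, (f r / coeff (ex r) (orb r)) • (⟨orb r, orb_mem r r.2⟩ : V), ?_⟩
  rw [map_sum]
  funext s
  rw [Finset.sum_apply, Finset.sum_eq_single s]
  · rw [map_smul]
    change f s / coeff (ex s) (orb s) * coeff (ex s) (orb s) = f s
    exact div_mul_cancel₀ _ (orb_coeff_self _)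
  · intro r _ hrs
    rw [map_smul]
    change f r / coeff (ex r) (orb r) * coeff (ex s) (orb r) = 0
    rw [orb_coeff_ne r s r.2 s.2 (fun h => hrs (Subtype.ext h)), mul_zero]
  · simp

/-- The space of homogeneous degree-10 polynomials in `ℂ[z₀,…,z₄]` invariant under
`g₁` and `g₂` has dimension 41. -/
theorem stmt_18 :
    Module.finrank ℂ
      ↥(homogeneousSubmodule (Fin 5) ℂ 10 ⊓
        LinearMap.ker (compG1.toLinearMap - LinearMap.id) ⊓
        LinearMap.ker (compG2.toLinearMap - LinearMap.id)) = 41 := by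
  change Module.finrank ℂ V = 41
  rw [(LinearEquiv.ofBijective Phi ⟨Phi_inj, Phi_surj⟩).finrank_eq, Module.finrank_fintype_fun_eq_card,
    Fintype.card_coe, reps_card]
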